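/- Fix a real number β < 1 and for n ≥ 2 define C_n = (1 + (n−1)(1−β))/n if n is odd and C_n = 1−β if n is even. Let f(z) = z + Σ_{n≥2} a_n zⁿ be analytic on the open unit disc 𝔻 with Re((1−z²)f′(z)) > β for all z ∈ 𝔻. Then |a_n| ≤ C_n for every integer n ≥ 2. -/

import Mathlib

/-!
If `g = ∑ cₖ zᵏ` is holomorphic on the unit disc with `Re g ≥ β`, then Carathéodory's lemma gives
`‖cₖ‖ ≤ 2 (Re c₀ - β)` for `k ≥ 1`: on a circle of radius `r < 1` the average of `z⁻ᵏ · g` is `cₖ`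
while that of `z⁻ᵏ · conj g` vanishes, so `cₖ` is the average of `z⁻ᵏ · 2 (Re g - β)`, whose
modulus averages to `2 r⁻ᵏ (Re c₀ - β)`. For `f = ∑ aₖ zᵏ` and `g = (1 - z²) f'` one has
`c₀ = a₁ = 1`, `c₁ = 2 a₂` and `cₖ = (k + 1) aₖ₊₁ - (k - 1) aₖ₋₁` for `k ≥ 2`, so `n aₙ` moves by
at most `2 (1 - β)` when `n` increases by two, starting from `1 · a₁ = 1` on odd and from `0` on
even indices.
-/

open Complex ComplexConjugate Filter Metric Topology
open Real (circleAverage circleAverage_congr_sphere circleAverage_def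
  circleAverage_eq_circleIntegral circleAverage_fun_add circleAverage_fun_smul two_pi_pos)
open scoped Nat

section CircleAverage

variable {E : Type*} [NormedAddCommGroup E]

theorem norm_circleAverage_le_circleAverage_norm [NormedSpace ℝ E] (f : ℂ → E) (c : ℂ) (R : ℝ) :
    ‖circleAverage f c R‖ ≤ circleAverage (fun z ↦ ‖f z‖) c R := by
  rw [circleAverage_def, circleAverage_def, norm_smul, smul_eq_mul,
    Real.norm_of_nonneg (inv_nonneg.2 two_pi_pos.le)]
  gcongr
  exact intervalIntegral.norm_integral_le_integral_norm two_pi_pos.le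

theorem circleAverage_inv_sub_pow_smul [NormedSpace ℂ E] [CompleteSpace E] {f : ℂ → E} {c : ℂ}
    {R : ℝ} (hR : 0 < R) (hf : DiffContOnCl ℂ f (ball c R)) (n : ℕ) :
    circleAverage (fun z ↦ ((z - c) ^ n)⁻¹ • f z) c R = (n ! : ℂ)⁻¹ • iteratedDeriv n f c := by
  have cauchy := hf.circleIntegral_one_div_sub_center_pow_smul hR n
  simp only [one_div, pow_succ, mul_inv_rev, mul_smul] at cauchy
  rw [circleAverage_eq_circleIntegral hR.ne', cauchy, smul_smul, div_eq_mul_inv,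
    inv_mul_cancel_left₀ two_pi_I_ne_zero]

end CircleAverage

section Caratheodory

variable {f : ℂ → ℂ} {c : ℂ} {R β : ℝ} {n : ℕ}

theorem circleAverage_inv_sub_pow_mul_conj_eq_zero (hR : 0 < R)
    (hf : DiffContOnCl ℂ f (ball c R)) (hn : n ≠ 0) :
    circleAverage (fun z ↦ ((z - c) ^ n)⁻¹ * conj (f z)) c R = 0 := by
  have hd : DiffContOnCl ℂ (fun z ↦ (z - c) ^ n * f z) (ball c R) :=
    (by fun_prop : Differentiable ℂ fun z : ℂ ↦ (z - c) ^ n).diffContOnCl.smul hf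
  have mean_value : circleAverage (fun z ↦ (z - c) ^ n * f z) c R = 0 := by
    rw [← abs_of_pos hR] at hd
    simpa [hn] using hd.circleAverage
  have hint : CircleIntegrable (fun z ↦ (z - c) ^ n * f z) c R :=
    (hd.continuousOn_ball.mono sphere_subset_closedBall).circleIntegrable hR.le
  have inv_eq_conj : Set.EqOn (fun z ↦ ((z - c) ^ n)⁻¹ * conj (f z))
      (fun z ↦ ((R ^ n) ^ 2)⁻¹ • ((conjCLE : ℂ →L[ℝ] ℂ) ∘ fun z ↦ (z - c) ^ n * f z) z)
      (sphere c |R|) := by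
    intro z hz
    have norm_sub : ‖z - c‖ = R := by simpa [abs_of_pos hR, dist_eq] using hz
    simp only [inv_def ((z - c) ^ n), map_pow, map_mul, normSq_eq_norm_sq, norm_sub, ofReal_inv,
      ofReal_pow, ContinuousLinearEquiv.coe_coe, ContinuousAlgEquiv.coe_coeCLE,
      Function.comp_apply, conjCAE_apply, real_smul]
    ring
  rw [circleAverage_congr_sphere inv_eq_conj, circleAverage_fun_smul,
    (conjCLE : ℂ →L[ℝ] ℂ).circleAverage_comp_comm hint, mean_value, map_zero, smul_zero]

theorem circleAverage_inv_sub_pow_mul_two_re (hR : 0 < R)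
    (hf : DiffContOnCl ℂ f (ball c R)) (hn : n ≠ 0) :
    circleAverage (fun z ↦ ((z - c) ^ n)⁻¹ * (2 * (f z).re : ℝ)) c R =
      (n ! : ℂ)⁻¹ * iteratedDeriv n f c := by
  have hfc : ContinuousOn f (sphere c R) := hf.continuousOn_ball.mono sphere_subset_closedBall
  have hpow : ContinuousOn (fun z ↦ ((z - c) ^ n)⁻¹) (sphere c R) :=
    ContinuousOn.inv₀ (by fun_prop) fun z hz ↦
      pow_ne_zero n (sub_ne_zero.2 (ne_of_mem_sphere hz hR.ne'))
  calc circleAverage (fun z ↦ ((z - c) ^ n)⁻¹ * (2 * (f z).re : ℝ)) c R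
      = circleAverage (fun z ↦ ((z - c) ^ n)⁻¹ * f z + ((z - c) ^ n)⁻¹ * conj (f z)) c R := by
        simp only [← mul_add, add_conj]
    _ = circleAverage (fun z ↦ ((z - c) ^ n)⁻¹ * f z) c R +
          circleAverage (fun z ↦ ((z - c) ^ n)⁻¹ * conj (f z)) c R :=
        circleAverage_fun_add ((hpow.mul hfc).circleIntegrable hR.le)
          ((hpow.mul (continuous_conj.comp_continuousOn hfc)).circleIntegrable hR.le)
    _ = (n ! : ℂ)⁻¹ * iteratedDeriv n f c := by
        rw [circleAverage_inv_sub_pow_mul_conj_eq_zero hR hf hn, add_zero]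
        exact circleAverage_inv_sub_pow_smul hR hf n

theorem circleAverage_re (hR : 0 < R) (hf : DiffContOnCl ℂ f (ball c R)) :
    circleAverage (fun z ↦ (f z).re) c R = (f c).re := by
  have hint : CircleIntegrable f c R :=
    (hf.continuousOn_ball.mono sphere_subset_closedBall).circleIntegrable hR.le
  rw [← abs_of_pos hR] at hf
  exact (reCLM.circleAverage_comp_comm hint).trans (congrArg re hf.circleAverage)

theorem norm_iteratedDeriv_le_of_forall_mem_sphere_re_nonneg (hR : 0 < R)
    (hf : DiffContOnCl ℂ f (ball c R)) (hre : ∀ z ∈ sphere c R, 0 ≤ (f z).re) (hn : n ≠ 0) :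
    ‖iteratedDeriv n f c‖ ≤ n ! * (2 * (f c).re) / R ^ n := by
  have norm_eq : Set.EqOn (fun z ↦ ‖((z - c) ^ n)⁻¹ * (2 * (f z).re : ℝ)‖)
      (fun z ↦ (2 / R ^ n) • (f z).re) (sphere c |R|) := by
    intro z hz
    rw [abs_of_pos hR] at hz
    have norm_sub : ‖z - c‖ = R := by simpa [dist_eq] using hz
    simp only [norm_mul, norm_inv, norm_pow, norm_sub, norm_real, norm_ofNat,
      Real.norm_of_nonneg (hre z hz), ofReal_mul, ofReal_ofNat, smul_eq_mul]
    ring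
  have bound : ‖(n ! : ℂ)⁻¹ * iteratedDeriv n f c‖ ≤ 2 / R ^ n * (f c).re :=
    calc ‖(n ! : ℂ)⁻¹ * iteratedDeriv n f c‖
        = ‖circleAverage (fun z ↦ ((z - c) ^ n)⁻¹ * (2 * (f z).re : ℝ)) c R‖ := by
          rw [circleAverage_inv_sub_pow_mul_two_re hR hf hn]
      _ ≤ circleAverage (fun z ↦ ‖((z - c) ^ n)⁻¹ * (2 * (f z).re : ℝ)‖) c R :=
          norm_circleAverage_le_circleAverage_norm _ c R
      _ = 2 / R ^ n * (f c).re := by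
          rw [circleAverage_congr_sphere norm_eq, circleAverage_fun_smul, circleAverage_re hR hf,
            smul_eq_mul]
  rw [norm_mul, norm_inv, Complex.norm_natCast, inv_mul_le_iff₀ (by positivity)] at bound
  exact bound.trans_eq (by ring)

theorem norm_iteratedDeriv_le_of_forall_mem_ball_le_re (hR : 0 < R)
    (hf : DifferentiableOn ℂ f (ball c R)) (hre : ∀ z ∈ ball c R, β ≤ (f z).re) (hn : n ≠ 0) :
    ‖iteratedDeriv n f c‖ ≤ n ! * (2 * ((f c).re - β)) / R ^ n := by
  have bound_of_lt : ∀ r ∈ Set.Ioo 0 R,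
      ‖iteratedDeriv n f c‖ ≤ n ! * (2 * ((f c).re - β)) / r ^ n := by
    rintro r ⟨hr, hrR⟩
    have hshift : DiffContOnCl ℂ (fun z ↦ -(β : ℂ) + f z) (ball c r) :=
      (hf.diffContOnCl_ball (closedBall_subset_ball hrR)).const_add _
    have hre_shift : ∀ z ∈ sphere c r, 0 ≤ (-(β : ℂ) + f z).re := fun z hz ↦ by
      simpa using hre z (sphere_subset_ball hrR hz)
    have bound := norm_iteratedDeriv_le_of_forall_mem_sphere_re_nonneg hr hshift hre_shift hn
    rw [iteratedDeriv_const_add (Nat.pos_of_ne_zero hn)] at bound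
    simpa [neg_add_eq_sub] using bound
  have tendsto_bound : Tendsto (fun r ↦ n ! * (2 * ((f c).re - β)) / r ^ n) (𝓝[<] R)
      (𝓝 (n ! * (2 * ((f c).re - β)) / R ^ n)) :=
    (ContinuousAt.div (by fun_prop) (by fun_prop) (by positivity)).tendsto.mono_left
      nhdsWithin_le_nhds
  exact ge_of_tendsto tendsto_bound (eventually_of_mem (Ioo_mem_nhdsLT hR) bound_of_lt)

end Caratheodory

section PowerSeries

variable {𝕜 : Type*} [RCLike 𝕜] {R : ℝ}

theorem hasFPowerSeriesOnBall_ofScalars_of_hasSum {f : 𝕜 → 𝕜} {a : ℕ → 𝕜} (hR : 0 < R)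
    (hf : ∀ z ∈ ball 0 R, HasSum (fun k ↦ a k * z ^ k) (f z)) :
    HasFPowerSeriesOnBall f (.ofScalars 𝕜 a) 0 (.ofReal R) := by
  refine ⟨ENNReal.le_of_forall_nnreal_lt fun r hr ↦ ?_, by simpa using hR, fun {y} hy ↦ ?_⟩
  · have hrR : ((r : ℝ) : 𝕜) ∈ ball 0 R := by
      rw [ENNReal.coe_lt_ofReal] at hr
      simpa using hr
    refine FormalMultilinearSeries.le_radius_of_summable _ ?_
    simpa using (hf _ hrR).summable.norm
  · rw [eball_ofReal] at hy
    simpa [mul_comm] using hf y hy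

theorem iteratedDeriv_zero_of_hasSum {f : 𝕜 → 𝕜} {a : ℕ → 𝕜} (hR : 0 < R)
    (hf : ∀ z ∈ ball 0 R, HasSum (fun k ↦ a k * z ^ k) (f z)) (n : ℕ) :
    iteratedDeriv n f 0 = n ! * a n := by
  rw [iteratedDeriv_eq_iteratedFDeriv,
    ← (hasFPowerSeriesOnBall_ofScalars_of_hasSum hR hf).factorial_smul]
  simp

variable {f : ℂ → ℂ} {a : ℕ → ℂ} {β : ℝ}

theorem differentiableOn_ball_of_hasSum (hR : 0 < R)
    (hf : ∀ z ∈ ball 0 R, HasSum (fun k ↦ a k * z ^ k) (f z)) :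
    DifferentiableOn ℂ f (ball 0 R) := by
  simpa using (hasFPowerSeriesOnBall_ofScalars_of_hasSum hR hf).differentiableOn

theorem hasSum_deriv_of_hasSum (hR : 0 < R)
    (hf : ∀ z ∈ ball 0 R, HasSum (fun k ↦ a k * z ^ k) (f z)) {z : ℂ} (hz : z ∈ ball 0 R) :
    HasSum (fun k : ℕ ↦ (k + 1) * a (k + 1) * z ^ k) (deriv f z) := by
  have taylor := hasSum_taylorSeries_on_ball
    ((differentiableOn_ball_of_hasSum hR hf).deriv isOpen_ball) hz
  convert! taylor using 2 with k
  have factorial_ne_zero : (k ! : ℂ) ≠ 0 := Nat.cast_ne_zero.2 k.factorial_ne_zero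
  rw [← iteratedDeriv_succ', iteratedDeriv_zero_of_hasSum hR hf, Nat.factorial_succ]
  simp [field]

theorem norm_coeff_le_of_le_re (hR : 0 < R)
    (hf : ∀ z ∈ ball 0 R, HasSum (fun k ↦ a k * z ^ k) (f z))
    (hre : ∀ z ∈ ball 0 R, β ≤ (f z).re) {n : ℕ} (hn : n ≠ 0) :
    ‖a n‖ ≤ 2 * ((a 0).re - β) / R ^ n := by
  have bound := norm_iteratedDeriv_le_of_forall_mem_ball_le_re hR
    (differentiableOn_ball_of_hasSum hR hf) hre hn
  have f_zero : f 0 = a 0 := by simpa using iteratedDeriv_zero_of_hasSum hR hf 0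
  rw [iteratedDeriv_zero_of_hasSum hR hf, norm_mul, Complex.norm_natCast, f_zero,
    mul_div_assoc] at bound
  exact le_of_mul_le_mul_left bound (by positivity)

theorem hasSum_one_sub_pow_mul {A : Type*} [CommRing A] [TopologicalSpace A] [IsTopologicalRing A]
    {a : ℕ → A} {s z : A} (h : HasSum (fun k ↦ a k * z ^ k) s) (m : ℕ) :
    HasSum (fun k ↦ (a k - if m ≤ k then a (k - m) else 0) * z ^ k) ((1 - z ^ m) * s) := by
  have shifted : HasSum (fun k ↦ (if m ≤ k then a (k - m) else 0) * z ^ k) (z ^ m * s) := by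
    rw [← (add_left_injective m).hasSum_iff]
    · convert! h.mul_left (z ^ m) using 2 with k
      rw [Function.comp_apply, if_pos (Nat.le_add_left m k), Nat.add_sub_cancel, pow_add]
      ring
    · intro k hk
      have hkm : ¬ m ≤ k := fun hmk ↦ hk ⟨k - m, Nat.sub_add_cancel hmk⟩
      simp [hkm]
  simpa only [sub_mul, one_mul] using h.sub shifted

end PowerSeries

section OneSubPow

variable {h : ℂ → ℂ} {b : ℕ → ℂ} {β : ℝ} {m : ℕ}
  (hh : ∀ z ∈ ball 0 1, HasSum (fun k ↦ b k * z ^ k) (h z))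
  (hre : ∀ z ∈ ball 0 1, β ≤ ((1 - z ^ m) * h z).re)

include hh hre

theorem norm_coeff_le_of_le_re_one_sub_pow_mul {k : ℕ} (hk : k ≠ 0) (hkm : k < m) :
    ‖b k‖ ≤ 2 * ((b 0).re - β) := by
  simpa [Nat.ne_zero_of_lt hkm, hkm.not_ge] using norm_coeff_le_of_le_re one_pos
    (fun z hz ↦ hasSum_one_sub_pow_mul (hh z hz) m) hre hk

theorem norm_coeff_add_sub_coeff_le_of_le_re_one_sub_pow_mul (hm : m ≠ 0) (k : ℕ) :
    ‖b (k + m) - b k‖ ≤ 2 * ((b 0).re - β) := by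
  simpa [hm] using norm_coeff_le_of_le_re one_pos
    (fun z hz ↦ hasSum_one_sub_pow_mul (hh z hz) m) hre (n := k + m) (by omega)

theorem norm_coeff_add_mul_le_of_le_re_one_sub_pow_mul (hm : m ≠ 0) (k q : ℕ) :
    ‖b (k + q * m)‖ ≤ ‖b k‖ + q * (2 * ((b 0).re - β)) := by
  induction q with
  | zero => simp
  | succ q ih =>
    have step := norm_coeff_add_sub_coeff_le_of_le_re_one_sub_pow_mul hh hre hm (k + q * m)
    rw [add_assoc, ← Nat.succ_mul] at step
    push_cast
    linarith [norm_le_norm_add_norm_sub' (b (k + (q + 1) * m)) (b (k + q * m))]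

end OneSubPow

section OneSubPowDeriv

variable {f : ℂ → ℂ} {a : ℕ → ℂ} {β : ℝ} {m : ℕ}
  (hf : ∀ z ∈ ball 0 1, HasSum (fun k ↦ a k * z ^ k) (f z))
  (hre : ∀ z ∈ ball 0 1, β ≤ ((1 - z ^ m) * deriv f z).re)

include hf hre

theorem mul_norm_coeff_mul_add_one_le_of_le_re_one_sub_pow_mul_deriv (hm : m ≠ 0) (q : ℕ) :
    (q * m + 1 : ℕ) * ‖a (q * m + 1)‖ ≤ ‖a 1‖ + q * (2 * ((a 1).re - β)) := by
  have growth := norm_coeff_add_mul_le_of_le_re_one_sub_pow_mul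
    (fun z hz ↦ hasSum_deriv_of_hasSum one_pos hf hz) hre hm 0 q
  simpa only [zero_add, Nat.cast_zero, one_mul, norm_mul, ← Nat.cast_succ, Complex.norm_natCast]
    using growth

theorem mul_norm_coeff_add_mul_add_one_le_of_le_re_one_sub_pow_mul_deriv {k : ℕ} (hk : k ≠ 0)
    (hkm : k < m) (q : ℕ) :
    (k + q * m + 1 : ℕ) * ‖a (k + q * m + 1)‖ ≤ (q + 1) * (2 * ((a 1).re - β)) := by
  have hderiv := fun z hz ↦ hasSum_deriv_of_hasSum one_pos hf (z := z) hz
  have initial := norm_coeff_le_of_le_re_one_sub_pow_mul hderiv hre hk hkm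
  have growth := norm_coeff_add_mul_le_of_le_re_one_sub_pow_mul hderiv hre
    (Nat.ne_zero_of_lt hkm) k q
  have bound := growth.trans (add_le_add_left initial _)
  rw [← one_add_mul, add_comm 1] at bound
  simpa [← Nat.cast_succ, -Nat.cast_add] using bound

end OneSubPowDeriv

theorem coeff_bound_F2_beta
    (β : ℝ) (hβ : β < 1) (C : ℕ → ℝ)
    (hC : ∀ n, 2 ≤ n →
      C n = if Odd n then (1 + ((n : ℝ) - 1) * (1 - β)) / n else 1 - β)
    (f : ℂ → ℂ) (a : ℕ → ℂ)
    (ha0 : a 0 = 0) (ha1 : a 1 = 1)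
    (hf : ∀ z ∈ Metric.ball (0 : ℂ) 1, HasSum (fun k => a k * z ^ k) (f z))
    (hre : ∀ z ∈ Metric.ball (0 : ℂ) 1, β < ((1 - z ^ 2) * deriv f z).re)
    (n : ℕ) (hn : 2 ≤ n) :
    ‖a n‖ ≤ C n := by
  have hre_le : ∀ z ∈ ball 0 1, β ≤ ((1 - z ^ 2) * deriv f z).re := fun z hz ↦ (hre z hz).le
  have n_pos : (0 : ℝ) < n := by positivity
  rw [hC n hn]
  split_ifs with hodd
  · obtain ⟨q, rfl⟩ : ∃ q, n = q * 2 + 1 := ⟨n / 2, by grind⟩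
    have bound := mul_norm_coeff_mul_add_one_le_of_le_re_one_sub_pow_mul_deriv hf hre_le
      two_ne_zero q
    rw [ha1, norm_one, one_re] at bound
    rw [le_div_iff₀' n_pos]
    exact bound.trans_eq (by push_cast; ring)
  · obtain ⟨q, rfl⟩ : ∃ q, n = 1 + q * 2 + 1 := ⟨n / 2 - 1, by grind⟩
    have bound := mul_norm_coeff_add_mul_add_one_le_of_le_re_one_sub_pow_mul_deriv hf hre_le
      one_ne_zero one_lt_two q
    rw [ha1, one_re] at bound
    exact le_of_mul_le_mul_left (bound.trans_eq (by push_cast; ring)) n_pos
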